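/- Define Φ: [−1,1] → [−1,1] by Φ(x) = x + (1/(2π√2))·x·sin(2π·ln|x|) for x ∈ [−1,0) and Φ(x) = x³ for x ∈ [0,1]. Then Φ is a strictly increasing homeomorphism of [−1,1] onto itself, and Φ does not have s-limit shadowing. -/

import Mathlib

/-!
On the negative half-line `Φ` agrees with `g x = x + c x sin (2π log x)`, `c = 1 / (2π√2)`, whose
derivative `1 + c sin + (1/√2) cos` is positive because `c + 1/√2 < 1`; this gives monotonicity.
Continuity at `0` holds since `|x sin _| ≤ |x|`.

Failure of s-limit shadowing comes from the fixed points `-exp (-m)` accumulating at `0` from the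
left, while the positive points near `0` are attracted to `0`. Given `δ`, follow the orbit of `1/2`
until it is within `δ/2` of `0`, jump to a fixed point `-exp (-m)` with `exp (-m) < δ/2`, and stay
there. This is an asymptotic `δ`-pseudo-orbit. A point that `1/4`-shadows it is positive, so its
orbit stays positive and cannot converge to `-exp (-m)`.
-/

/-- `x` is a `δ`-pseudo-orbit for `f` contained in `A`, and `z ∈ A` `ε`-shadows it. -/
def ShadowingOn {X : Type*} [MetricSpace X] (f : X → X) (A : Set X) : Prop :=
  ∀ ε : ℝ, 0 < ε → ∃ δ : ℝ, 0 < δ ∧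
    ∀ x : ℕ → X, (∀ n, x n ∈ A) → (∀ n, dist (f (x n)) (x (n + 1)) < δ) →
      ∃ z ∈ A, ∀ n, dist (f^[n] z) (x n) < ε

def LimitShadowingOn {X : Type*} [MetricSpace X] (f : X → X) (A : Set X) : Prop :=
  ∀ x : ℕ → X, (∀ n, x n ∈ A) →
    Filter.Tendsto (fun n => dist (f (x n)) (x (n + 1))) Filter.atTop (nhds 0) →
    ∃ z ∈ A, Filter.Tendsto (fun n => dist (f^[n] z) (x n)) Filter.atTop (nhds 0)

def SLimitShadowingOn {X : Type*} [MetricSpace X] (f : X → X) (A : Set X) : Prop :=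
  ∀ ε : ℝ, 0 < ε → ∃ δ : ℝ, 0 < δ ∧
    (∀ x : ℕ → X, (∀ n, x n ∈ A) → (∀ n, dist (f (x n)) (x (n + 1)) < δ) →
      ∃ z ∈ A, ∀ n, dist (f^[n] z) (x n) < ε) ∧
    (∀ x : ℕ → X, (∀ n, x n ∈ A) → (∀ n, dist (f (x n)) (x (n + 1)) < δ) →
      Filter.Tendsto (fun n => dist (f (x n)) (x (n + 1))) Filter.atTop (nhds 0) →
      ∃ z ∈ A, (∀ n, dist (f^[n] z) (x n) < ε) ∧
        Filter.Tendsto (fun n => dist (f^[n] z) (x n)) Filter.atTop (nhds 0))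

/-- The circle/interval homeomorphism `Φ` of Barwell–Good–Oprocha type. -/
noncomputable def Phi : ℝ → ℝ := fun x =>
  if x < 0 then x + 1 / (2 * Real.pi * Real.sqrt 2) * x * Real.sin (2 * Real.pi * Real.log |x|)
  else x ^ 3

open Filter Topology Set

/-- The formula for `Phi` on the negative half-line, taken on all of `ℝ`. The absolute value is
dropped because `Real.log |x| = Real.log x`. -/
noncomputable def PhiNeg (x : ℝ) : ℝ :=
  x + 1 / (2 * Real.pi * Real.sqrt 2) * x * Real.sin (2 * Real.pi * Real.log x)

lemma Phi_of_neg {x : ℝ} (hx : x < 0) : Phi x = PhiNeg x := by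
  simp [Phi, PhiNeg, hx, Real.log_abs]

lemma Phi_of_nonneg {x : ℝ} (hx : 0 ≤ x) : Phi x = x ^ 3 := by
  simp [Phi, not_lt.mpr hx]

lemma PhiNeg_zero : PhiNeg 0 = 0 := by simp [PhiNeg]

/-- Gluing in a form from which continuity is immediate. -/
lemma Phi_eq (x : ℝ) : Phi x = PhiNeg (min x 0) + (max x 0) ^ 3 := by
  rcases lt_or_ge x 0 with h | h
  · rw [Phi_of_neg h, min_eq_left h.le, max_eq_right h.le]; simp
  · rw [Phi_of_nonneg h, min_eq_right h, max_eq_left h, PhiNeg_zero]; simp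

lemma continuous_PhiNeg : Continuous PhiNeg := by
  have key : Continuous fun x : ℝ => x * Real.sin (2 * Real.pi * Real.log x) := by
    rw [continuous_iff_continuousAt]
    intro x
    by_cases hx : x = 0
    · subst hx
      have h : Tendsto (fun x : ℝ => x * Real.sin (2 * Real.pi * Real.log x)) (𝓝 0) (𝓝 0) := by
        refine squeeze_zero_norm (a := fun x : ℝ => |x|) (fun y => ?_) ?_
        · rw [Real.norm_eq_abs, abs_mul]
          exact mul_le_of_le_one_right (abs_nonneg _) (Real.abs_sin_le_one _)
        · simpa using (continuous_abs.tendsto (0 : ℝ))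
      simpa [ContinuousAt] using h
    · have := Real.continuousAt_log hx
      fun_prop
  have h : PhiNeg = fun x => x + 1 / (2 * Real.pi * Real.sqrt 2) *
      (x * Real.sin (2 * Real.pi * Real.log x)) := by
    funext x; simp only [PhiNeg]; ring
  rw [h]
  fun_prop

lemma continuous_Phi : Continuous Phi := by
  have h : Phi = fun x => PhiNeg (min x 0) + (max x 0) ^ 3 := funext Phi_eq
  have := continuous_PhiNeg
  rw [h]
  fun_prop

lemma hasDerivAt_PhiNeg {x : ℝ} (hx : x ≠ 0) :
    HasDerivAt PhiNeg (1 + 1 / (2 * Real.pi * Real.sqrt 2) * Real.sin (2 * Real.pi * Real.log x)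
      + 1 / Real.sqrt 2 * Real.cos (2 * Real.pi * Real.log x)) x := by
  have h1 := ((Real.hasDerivAt_log hx).const_mul (2 * Real.pi)).sin
  have h2 := (hasDerivAt_id x).add
    (((hasDerivAt_id x).const_mul (1 / (2 * Real.pi * Real.sqrt 2))).mul h1)
  refine h2.congr_deriv ?_
  have := Real.pi_pos
  have h3 : Real.sqrt 2 ≠ 0 := by positivity
  simp only [id]
  field_simp
  ring

lemma deriv_PhiNeg_pos {x : ℝ} (hx : x ≠ 0) : 0 < deriv PhiNeg x := by
  rw [(hasDerivAt_PhiNeg hx).deriv]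
  set θ := 2 * Real.pi * Real.log x
  have hs : (4 / 3 : ℝ) < Real.sqrt 2 := Real.lt_sqrt_of_sq_lt (by norm_num)
  have hp := Real.pi_gt_three
  have h1 : 1 / Real.sqrt 2 ≤ 3 / 4 := by
    rw [div_le_div_iff₀ (by positivity) (by norm_num)]; linarith
  have h2 : 1 / (2 * Real.pi * Real.sqrt 2) ≤ 1 / 8 := by
    apply one_div_le_one_div_of_le (by norm_num)
    nlinarith
  have h3 : 0 < 1 / Real.sqrt 2 := by positivity
  have h4 : 0 < 1 / (2 * Real.pi * Real.sqrt 2) := by positivity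
  nlinarith [Real.neg_one_le_sin θ, Real.neg_one_le_cos θ]

lemma strictMono_Phi : StrictMono Phi := by
  have h1 : StrictMonoOn Phi (Iic 0) := by
    have h : StrictMonoOn PhiNeg (Iic 0) := by
      refine strictMonoOn_of_deriv_pos (convex_Iic 0) continuous_PhiNeg.continuousOn ?_
      intro x hx
      rw [interior_Iic] at hx
      exact deriv_PhiNeg_pos (ne_of_lt hx)
    refine h.congr fun x hx => ?_
    rcases lt_or_eq_of_le (mem_Iic.mp hx) with h | h
    · exact (Phi_of_neg h).symm
    · rw [h, PhiNeg_zero, Phi_of_nonneg le_rfl]; simp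
  have h2 : StrictMonoOn Phi (Ici 0) := by
    intro x hx y hy hxy
    rw [Phi_of_nonneg hx, Phi_of_nonneg hy]
    exact pow_lt_pow_left₀ hxy hx (by norm_num)
  exact h1.Iic_union_Ici h2

lemma Phi_neg_exp (m : ℕ) : Phi (-Real.exp (-m)) = -Real.exp (-m) := by
  have h : Real.sin (2 * Real.pi * -(m : ℝ)) = 0 := by
    rw [show 2 * Real.pi * -(m : ℝ) = -((2 * m : ℕ) * Real.pi) by push_cast; ring, Real.sin_neg,
      Real.sin_nat_mul_pi, neg_zero]
  rw [Phi_of_neg (neg_lt_zero.mpr (Real.exp_pos _)), PhiNeg, Real.log_neg_eq_log, Real.log_exp, h]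
  simp

lemma Phi_neg_one : Phi (-1) = -1 := by simpa using Phi_neg_exp 0

lemma Phi_one : Phi 1 = 1 := by rw [Phi_of_nonneg zero_le_one]; norm_num

lemma mapsTo_Phi : MapsTo Phi (Icc (-1) 1) (Icc (-1) 1) := fun _ hx =>
  ⟨Phi_neg_one ▸ strictMono_Phi.monotone hx.1, Phi_one ▸ strictMono_Phi.monotone hx.2⟩

lemma Phi_image : Phi '' Icc (-1 : ℝ) 1 = Icc (-1 : ℝ) 1 := by
  refine Subset.antisymm mapsTo_Phi.image_subset ?_
  have h := intermediate_value_Icc (show (-1 : ℝ) ≤ 1 by norm_num)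
    (continuous_Phi.continuousOn (s := Icc (-1 : ℝ) 1))
  rwa [Phi_neg_one, Phi_one] at h

lemma Phi_iterate_pos {x : ℝ} (hx : 0 < x) (n : ℕ) : 0 < Phi^[n] x := by
  induction n with
  | zero => exact hx
  | succ n ih =>
    rw [Function.iterate_succ_apply', Phi_of_nonneg ih.le]
    positivity

lemma Phi_iterate_half_le (n : ℕ) : Phi^[n] (1 / 2) ≤ (1 / 2) ^ (n + 1) := by
  induction n with
  | zero => norm_num
  | succ n ih =>
    have h0 := Phi_iterate_pos (x := 1 / 2) (by norm_num) n
    have h1 : ((1 / 2 : ℝ)) ^ (n + 1) ≤ 1 / 2 := by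
      simpa using pow_le_pow_of_le_one (a := (1 / 2 : ℝ)) (by norm_num) (by norm_num)
        (Nat.succ_le_succ (Nat.zero_le n))
    rw [Function.iterate_succ_apply', Phi_of_nonneg h0.le, pow_succ (1 / 2 : ℝ) (n + 1)]
    set y := Phi^[n] (1 / 2)
    have h2 : y ^ 2 ≤ 1 / 2 := by nlinarith
    nlinarith

lemma Phi_not_sLimitShadowing : ¬ SLimitShadowingOn Phi (Icc (-1 : ℝ) 1) := by
  intro H
  obtain ⟨δ, hδ, -, H⟩ := H (1 / 4) (by norm_num)
  obtain ⟨N, hN⟩ := exists_pow_lt_of_lt_one (half_pos hδ) (show (1 / 2 : ℝ) < 1 by norm_num)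
  obtain ⟨m, hm⟩ := exists_pow_lt_of_lt_one (half_pos hδ)
    (show Real.exp (-1) < 1 from Real.exp_lt_one_iff.mpr (by norm_num))
  rw [← Real.exp_nat_mul, mul_neg_one] at hm
  have hp := Real.exp_pos (-(m : ℝ))
  have hle : Real.exp (-(m : ℝ)) ≤ 1 := Real.exp_le_one_iff.mpr (by simp)
  set p : ℝ := Real.exp (-(m : ℝ)) with hpdef
  have hfix : Phi (-p) = -p := Phi_neg_exp m
  set x : ℕ → ℝ := fun n => if n ≤ N then Phi^[n] (1 / 2) else -p with hx
  have hlate : ∀ n, N < n → x n = -p := fun n hn => if_neg (not_le.mpr hn)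
  have hlate0 : ∀ n, N < n → dist (Phi (x n)) (x (n + 1)) = 0 := fun n hn => by
    rw [hlate n hn, hlate (n + 1) (by omega), hfix, dist_self]
  have hmem : ∀ n, x n ∈ Icc (-1 : ℝ) 1 := by
    intro n
    by_cases hn : n ≤ N
    · simp only [hx, hn, if_true]
      exact mapsTo_Phi.iterate n ⟨by norm_num, by norm_num⟩
    · rw [hlate n (not_le.mp hn)]
      exact ⟨by linarith, by linarith⟩
  have hpseudo : ∀ n, dist (Phi (x n)) (x (n + 1)) < δ := by
    intro n
    rcases lt_trichotomy n N with hn | hn | hn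
    · simp only [hx, hn.le, Nat.succ_le_of_lt hn, if_true]
      rw [← Function.iterate_succ_apply' Phi, dist_self]
      exact hδ
    · -- The only jump: from `Φ^[N+1] (1/2) ∈ (0, δ/2)` to `-p ∈ (-δ/2, 0)`.
      rw [hlate (n + 1) (by omega)]
      simp only [hx, hn, le_refl, if_true]
      rw [← Function.iterate_succ_apply' Phi]
      have h1 := Phi_iterate_pos (x := 1 / 2) (by norm_num) (N + 1)
      have h2 := Phi_iterate_half_le (N + 1)
      have h3 : (1 / 2 : ℝ) ^ (N + 1 + 1) ≤ (1 / 2) ^ N :=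
        pow_le_pow_of_le_one (by norm_num) (by norm_num) (by omega)
      rw [Real.dist_eq, abs_lt]
      constructor <;> linarith
    · rw [hlate0 n hn]; exact hδ
  have hasymp : Tendsto (fun n => dist (Phi (x n)) (x (n + 1))) atTop (𝓝 0) := by
    refine tendsto_const_nhds.congr' ?_
    filter_upwards [eventually_gt_atTop N] with n hn
    exact (hlate0 n hn).symm
  obtain ⟨z, -, hz, hlim⟩ := H x hmem hpseudo hasymp
  have hz0 : 0 < z := by
    have := hz 0
    simp only [hx, Nat.zero_le, if_true, Function.iterate_zero, id, Real.dist_eq, abs_lt] at this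
    linarith
  have h : ∀ᶠ n in atTop, p ≤ dist (Phi^[n] z) (x n) := by
    filter_upwards [eventually_gt_atTop N] with n hn
    rw [hlate n hn, Real.dist_eq]
    have := Phi_iterate_pos hz0 n
    exact le_trans (by linarith) (le_abs_self _)
  exact absurd (ge_of_tendsto hlim h) (not_le.mpr hp)

/-- `Φ` is a strictly increasing homeomorphism of `[-1,1]` onto itself
which does not have s-limit shadowing. -/
theorem Phi_strictMono_homeo_not_slimit_shadowing :
    StrictMonoOn Phi (Set.Icc (-1 : ℝ) 1) ∧
    ContinuousOn Phi (Set.Icc (-1 : ℝ) 1) ∧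
    Phi '' Set.Icc (-1 : ℝ) 1 = Set.Icc (-1 : ℝ) 1 ∧
    ¬ SLimitShadowingOn Phi (Set.Icc (-1 : ℝ) 1) := by
  exact ⟨strictMono_Phi.strictMonoOn _, continuous_Phi.continuousOn, Phi_image,
    Phi_not_sLimitShadowing⟩
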